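/- arXiv:1405.0934 — 2 statements merged into one kernel-verified Lean document; each statement's English description precedes it below -/
import Mathlib

section
/- For all real x with 0 < x < π, the following inequalities hold: (2 − x⁴/60 + cos x)/3 < (sin x)/x < (8 + 7·cos x)/(15 − x²). -/
/-!
Cleared of denominators, each bound says that some `f` with `f 0 = f' 0 = f'' 0 = 0` is positive on
an interval `(0, b)`, for which `0 < f'''` there suffices. For the lower bound
`f''' y = y * (y - sin y)`; for the upper bound `f''' y = y * (sin y - y * cos y)`, which is
positive up to `5π/4`, hence up to `√15`, where the denominator `15 - x ^ 2` vanishes.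
-/

open Real Set

theorem lt_of_hasDerivAt_pos {f f' : ℝ → ℝ} {a b : ℝ} (hab : a < b)
    (hcont : ContinuousOn f (Icc a b)) (hderiv : ∀ y ∈ Ioo a b, HasDerivAt f (f' y) y)
    (hpos : ∀ y ∈ Ioo a b, 0 < f' y) : f a < f b := by
  have hmono : StrictMonoOn f (Icc a b) := by
    apply strictMonoOn_of_hasDerivWithinAt_pos (convex_Icc a b) hcont (f' := f') <;>
      rw [interior_Icc]
    · exact fun y hy => (hderiv y hy).hasDerivWithinAt
    · exact hpos
  exact hmono (left_mem_Icc.2 hab.le) (right_mem_Icc.2 hab.le) hab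

theorem hasDerivAt_sin_sub_mul_cos (y : ℝ) :
    HasDerivAt (fun y => sin y - y * cos y) (y * sin y) y :=
  ((hasDerivAt_sin y).sub ((hasDerivAt_id' y).mul (hasDerivAt_cos y))).congr_deriv (by ring)

theorem sin_sub_mul_cos_lt {x : ℝ} (hx : 0 < x) : sin x - x * cos x < x ^ 3 / 3 := by
  have hderiv (y : ℝ) : HasDerivAt (fun y => y ^ 3 / 3 - (sin y - y * cos y))
      (y * (y - sin y)) y :=
    (((hasDerivAt_pow 3 y).div_const 3).sub (hasDerivAt_sin_sub_mul_cos y)).congr_deriv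
      (by push_cast; ring)
  have hlt := lt_of_hasDerivAt_pos hx (by fun_prop) (fun y _ => hderiv y)
    fun y hy => mul_pos hy.1 (sub_pos.2 (sin_lt hy.1))
  simpa using hlt

theorem two_lt_two_mul_cos_add_mul_sin_add {x : ℝ} (hx : 0 < x) :
    2 < 2 * cos x + x * sin x + x ^ 4 / 12 := by
  have hderiv (y : ℝ) : HasDerivAt (fun y => 2 * cos y + y * sin y + y ^ 4 / 12)
      (y ^ 3 / 3 - (sin y - y * cos y)) y :=
    ((((hasDerivAt_cos y).const_mul 2).add ((hasDerivAt_id' y).mul (hasDerivAt_sin y))).add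
      ((hasDerivAt_pow 4 y).div_const 12)).congr_deriv (by push_cast; ring)
  have hlt := lt_of_hasDerivAt_pos hx (by fun_prop) (fun y _ => hderiv y)
    fun y hy => sub_pos.2 (sin_sub_mul_cos_lt hy.1)
  simpa using hlt

theorem mul_two_sub_add_cos_lt_three_mul_sin {x : ℝ} (hx : 0 < x) :
    x * (2 - x ^ 4 / 60 + cos x) < 3 * sin x := by
  have hderiv (y : ℝ) : HasDerivAt (fun y => 3 * sin y - y * (2 - y ^ 4 / 60 + cos y))
      (2 * cos y + y * sin y + y ^ 4 / 12 - 2) y :=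
    (((hasDerivAt_sin y).const_mul 3).sub ((hasDerivAt_id' y).mul
      ((((hasDerivAt_pow 4 y).div_const 60).const_sub 2).add (hasDerivAt_cos y)))).congr_deriv
      (by simp only [Pi.add_apply]; push_cast; ring)
  have hlt := lt_of_hasDerivAt_pos hx (by fun_prop) (fun y _ => hderiv y)
    fun y hy => sub_pos.2 (two_lt_two_mul_cos_add_mul_sin_add hy.1)
  simpa using hlt

theorem cos_lt_sin_of_pi_div_four_lt {x : ℝ} (hx : π / 4 < x) (hx' : x < 5 * π / 4) :
    cos x < sin x := by
  have hsin : 0 < sin (x - π / 4) := sin_pos_of_pos_of_lt_pi (by linarith) (by linarith)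
  rw [sin_sub, sin_pi_div_four, cos_pi_div_four, ← sub_mul] at hsin
  exact sub_pos.1 (pos_of_mul_pos_left hsin (by positivity))

theorem mul_cos_lt_sin {x : ℝ} (hx : 0 < x) (hx' : x < 5 * π / 4) : x * cos x < sin x := by
  rcases lt_or_ge x (π / 2) with hlt | hge
  · have hcos : 0 < cos x := cos_pos_of_mem_Ioo ⟨by linarith [pi_pos], hlt⟩
    rw [← lt_div_iff₀ hcos, ← tan_eq_sin_div_cos]
    exact lt_tan hx hlt
  · have hcos : cos x ≤ 0 := cos_nonpos_of_pi_div_two_le_of_le hge (by linarith [pi_pos])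
    calc
      x * cos x ≤ 1 * cos x := mul_le_mul_of_nonpos_right (by linarith [two_le_pi]) hcos
      _ = cos x := one_mul _
      _ < sin x := cos_lt_sin_of_pi_div_four_lt (by linarith [pi_pos]) hx'

theorem sq_mul_sin_lt {x : ℝ} (hx : 0 < x) (hx' : x < 5 * π / 4) :
    x ^ 2 * sin x < 3 * (sin x - x * cos x) := by
  have hderiv (y : ℝ) : HasDerivAt (fun y => 3 * (sin y - y * cos y) - y ^ 2 * sin y)
      (y * (sin y - y * cos y)) y :=
    (((hasDerivAt_sin_sub_mul_cos y).const_mul 3).sub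
      ((hasDerivAt_pow 2 y).mul (hasDerivAt_sin y))).congr_deriv (by push_cast; ring)
  have hlt := lt_of_hasDerivAt_pos hx (by fun_prop) (fun y _ => hderiv y)
    fun y hy => mul_pos hy.1 (sub_pos.2 (mul_cos_lt_sin hy.1 (hy.2.trans hx')))
  simpa using hlt

theorem eight_mul_cos_add_five_mul_sin_lt {x : ℝ} (hx : 0 < x) (hx' : x < 5 * π / 4) :
    8 * cos x + 5 * (x * sin x) < 8 + x ^ 2 * cos x := by
  have hderiv (y : ℝ) : HasDerivAt
      (fun y => 8 + y ^ 2 * cos y - (8 * cos y + 5 * (y * sin y)))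
      (3 * (sin y - y * cos y) - y ^ 2 * sin y) y :=
    ((((hasDerivAt_pow 2 y).mul (hasDerivAt_cos y)).const_add 8).sub
      (((hasDerivAt_cos y).const_mul 8).add
        (((hasDerivAt_id' y).mul (hasDerivAt_sin y)).const_mul 5))).congr_deriv
      (by push_cast; ring)
  have hlt := lt_of_hasDerivAt_pos hx (by fun_prop) (fun y _ => hderiv y)
    fun y hy => sub_pos.2 (sq_mul_sin_lt hy.1 (hy.2.trans hx'))
  simpa using hlt

theorem fifteen_sub_sq_mul_sin_lt {x : ℝ} (hx : 0 < x) (hx' : x < 5 * π / 4) :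
    (15 - x ^ 2) * sin x < x * (8 + 7 * cos x) := by
  have hderiv (y : ℝ) : HasDerivAt
      (fun y => y * (8 + 7 * cos y) - (15 - y ^ 2) * sin y)
      (8 + y ^ 2 * cos y - (8 * cos y + 5 * (y * sin y))) y :=
    (((hasDerivAt_id' y).mul (((hasDerivAt_cos y).const_mul 7).const_add 8)).sub
      (((hasDerivAt_pow 2 y).const_sub 15).mul (hasDerivAt_sin y))).congr_deriv
      (by push_cast; ring)
  have hlt := lt_of_hasDerivAt_pos hx (by fun_prop) (fun y _ => hderiv y)
    fun y hy => sub_pos.2 (eight_mul_cos_add_five_mul_sin_lt hy.1 (hy.2.trans hx'))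
  simpa using hlt

theorem sin_div_bounds_corollary_general {x : ℝ} (hx : x ≠ 0) :
    (2 - x ^ 4 / 60 + cos x) / 3 < sin x / x ∧
    (x ^ 2 < 15 → sin x / x < (8 + 7 * cos x) / (15 - x ^ 2)) := by
  wlog hx0 : 0 < x generalizing x
  · have hneg : 0 < -x := neg_pos.2 (hx.lt_of_le (not_lt.1 hx0))
    simpa [show Even 4 by decide] using this (neg_ne_zero.2 hx) hneg
  refine ⟨?_, fun hx15 => ?_⟩
  · rw [div_lt_div_iff₀ three_pos hx0, mul_comm, mul_comm (sin x)]
    exact mul_two_sub_add_cos_lt_three_mul_sin hx0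
  · have hx' : x < 5 * π / 4 := by nlinarith [pi_gt_d2]
    rw [div_lt_div_iff₀ hx0 (sub_pos.2 hx15), mul_comm, mul_comm _ x]
    exact fifteen_sub_sq_mul_sin_lt hx0 hx'

theorem sin_div_bounds_corollary (x : ℝ) (hx0 : 0 < x) (hxpi : x < Real.pi) :
    (2 - x ^ 4 / 60 + Real.cos x) / 3 < Real.sin x / x ∧
    Real.sin x / x < (8 + 7 * Real.cos x) / (15 - x ^ 2) := by
  have hx15 : x ^ 2 < 15 := by nlinarith [pi_lt_d2]
  exact (sin_div_bounds_corollary_general hx0.ne').imp_right fun hupper => hupper hx15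
end

section
/- For all real x with 0 < x < π/2, the following two-sided inequality holds: (π² − x² − π²x²/3)/(π² − x²) < x/(tan x) < (π² − 4x²)/(π² − x²). -/
/-!
By the partial fraction expansion of the cotangent, `1 - x cot x` is the sum over `k ≥ 1` of
`2x² / (k²π² - x²)`. For `0 < 4x² < π²` the denominators satisfy
`k² (π² - x²) ≤ k²π² - x² ≤ (4k² - 1) (π² - x²) / 3`, strictly for `k ≥ 2`, and summing the
resulting bounds with `∑ 1 / k² = π² / 6` and `∑ 2 / (4k² - 1) = 1` gives the two estimates.
The last sum is the expansion itself at `x = π / 2`.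
-/

open Real

theorem hasSum_one_sub_mul_complex_cot {z : ℂ} (hz : Complex.sin z ≠ 0) :
    HasSum (fun n : ℕ ↦ 2 * z ^ 2 / (((n + 1) * π) ^ 2 - z ^ 2)) (1 - z * Complex.cot z) := by
  have hpi : (π : ℂ) ≠ 0 := by exact_mod_cast pi_ne_zero
  obtain ⟨w, rfl⟩ : ∃ w : ℂ, z = π * w := ⟨z / π, by field_simp⟩
  have hw : w ∈ Complex.integerComplement := by
    rintro ⟨n, rfl⟩
    exact hz (by rw [mul_comm, Complex.sin_int_mul_pi])
  have hw0 : w ≠ 0 := Complex.integerComplement.ne_zero hw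
  have hcot : HasSum (cotTerm w) (π * Complex.cot (π * w) - 1 / w) := by
    rw [cot_series_rep' hw]
    exact (summable_cotTerm hw).hasSum
  have hterm (n : ℕ) : 2 * (π * w) ^ 2 / (((n + 1) * π) ^ 2 - (π * w) ^ 2) =
      -w * cotTerm w n := by
    have hfactor : ((n + 1) * (π : ℂ)) ^ 2 - (π * w) ^ 2 =
        π ^ 2 * -((w + (n + 1)) * (w - (n + 1))) := by ring
    rw [cotTerm_identity hw, hfactor, mul_pow, mul_left_comm,
      mul_div_mul_left _ _ (pow_ne_zero 2 hpi), div_neg]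
    ring
  have hvalue : 1 - π * w * Complex.cot (π * w) = -w * (π * Complex.cot (π * w) - 1 / w) := by
    linear_combination -mul_one_div_cancel hw0
  rw [funext hterm, hvalue]
  exact hcot.mul_left (-w)

theorem hasSum_one_sub_mul_cot {x : ℝ} (hx : sin x ≠ 0) :
    HasSum (fun n : ℕ ↦ 2 * x ^ 2 / (((n + 1) * π) ^ 2 - x ^ 2)) (1 - x * cot x) := by
  rw [← Complex.hasSum_ofReal]
  exact_mod_cast hasSum_one_sub_mul_complex_cot (z := x) (mod_cast hx)

theorem hasSum_two_div_four_mul_succ_sq_sub_one :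
    HasSum (fun n : ℕ ↦ 2 / (4 * ((n : ℝ) + 1) ^ 2 - 1)) 1 := by
  convert hasSum_one_sub_mul_cot (x := π / 2) (by simp) using 1
  · ext n
    have hfactor : (((n : ℝ) + 1) * π) ^ 2 - (π / 2) ^ 2 =
        (π / 2) ^ 2 * (4 * ((n : ℝ) + 1) ^ 2 - 1) := by ring
    rw [hfactor, mul_comm 2, mul_div_mul_left _ _ (by positivity)]
  · simp [cot_eq_cos_div_sin]

theorem hasSum_one_div_succ_sq : HasSum (fun n : ℕ ↦ 1 / ((n : ℝ) + 1) ^ 2) (π ^ 2 / 6) := by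
  simpa using (hasSum_nat_add_iff' 1).mpr hasSum_zeta_two

theorem hasSum_lt_of_zero_eq_of_succ_lt {M : Type*} [AddCommGroup M] [PartialOrder M]
    [IsOrderedAddMonoid M] [TopologicalSpace M] [IsTopologicalAddGroup M] [OrderClosedTopology M]
    {f g : ℕ → M} {a b : M} (hzero : f 0 = g 0) (hsucc : ∀ n, f (n + 1) < g (n + 1))
    (hf : HasSum f a) (hg : HasSum g b) : a < b :=
  hasSum_lt (Nat.rec hzero.le fun n _ ↦ (hsucc n).le) (hsucc 0) hf hg

section Comparison

variable {a x k : ℝ}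

theorem two_mul_sq_div_lt (hx0 : x ≠ 0) (hx : x ^ 2 < a ^ 2) (hk : 1 < k) :
    2 * x ^ 2 / ((k * a) ^ 2 - x ^ 2) < 2 * x ^ 2 / (a ^ 2 - x ^ 2) * (1 / k ^ 2) := by
  have hgap : 0 < a ^ 2 - x ^ 2 := sub_pos.2 hx
  have hden : (a ^ 2 - x ^ 2) * k ^ 2 < (k * a) ^ 2 - x ^ 2 := by
    have : 0 < x ^ 2 * (k ^ 2 - 1) := mul_pos (by positivity) (by nlinarith)
    linarith
  rw [div_mul_div_comm, mul_one]
  exact div_lt_div_of_pos_left (by positivity) (mul_pos hgap (by positivity)) hden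

theorem lt_two_mul_sq_div (hx0 : x ≠ 0) (hx : 4 * x ^ 2 < a ^ 2) (hk : 1 < k) :
    3 * x ^ 2 / (a ^ 2 - x ^ 2) * (2 / (4 * k ^ 2 - 1)) < 2 * x ^ 2 / ((k * a) ^ 2 - x ^ 2) := by
  have hk2 : 1 < k ^ 2 := one_lt_pow₀ hk two_ne_zero
  have hden_pos : 0 < (k * a) ^ 2 - x ^ 2 := by nlinarith
  have hden : 3 * ((k * a) ^ 2 - x ^ 2) < (a ^ 2 - x ^ 2) * (4 * k ^ 2 - 1) := by
    have : 0 < (a ^ 2 - 4 * x ^ 2) * (k ^ 2 - 1) := mul_pos (by linarith) (by linarith)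
    linarith
  calc 3 * x ^ 2 / (a ^ 2 - x ^ 2) * (2 / (4 * k ^ 2 - 1))
      = 3 * (2 * x ^ 2) / ((a ^ 2 - x ^ 2) * (4 * k ^ 2 - 1)) := by rw [div_mul_div_comm]; ring
    _ < 3 * (2 * x ^ 2) / (3 * ((k * a) ^ 2 - x ^ 2)) :=
        div_lt_div_of_pos_left (by positivity) (mul_pos three_pos hden_pos) hden
    _ = 2 * x ^ 2 / ((k * a) ^ 2 - x ^ 2) := mul_div_mul_left _ _ three_ne_zero

end Comparison

section Bounds

variable {x : ℝ}

theorem sin_ne_zero_of_abs_lt_pi (hx0 : x ≠ 0) (hx : |x| < π) : sin x ≠ 0 :=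
  (sin_eq_zero_iff_of_lt_of_lt (abs_lt.1 hx).1 (abs_lt.1 hx).2).not.2 hx0

theorem lt_mul_cot (hx0 : x ≠ 0) (hx : |x| < π) :
    (π ^ 2 - x ^ 2 - π ^ 2 * x ^ 2 / 3) / (π ^ 2 - x ^ 2) < x * cot x := by
  have hsq : x ^ 2 < π ^ 2 := sq_lt_sq' (abs_lt.1 hx).1 (abs_lt.1 hx).2
  have hsum : 1 - x * cot x < 2 * x ^ 2 / (π ^ 2 - x ^ 2) * (π ^ 2 / 6) :=
    hasSum_lt_of_zero_eq_of_succ_lt (by simp)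
      (fun n ↦ two_mul_sq_div_lt hx0 hsq (by norm_cast; lia))
      (hasSum_one_sub_mul_cot (sin_ne_zero_of_abs_lt_pi hx0 hx))
      (hasSum_one_div_succ_sq.mul_left _)
  calc (π ^ 2 - x ^ 2 - π ^ 2 * x ^ 2 / 3) / (π ^ 2 - x ^ 2)
      = 1 - 2 * x ^ 2 / (π ^ 2 - x ^ 2) * (π ^ 2 / 6) := by
        rw [sub_div, div_self (sub_pos.2 hsq).ne']; ring
    _ < x * cot x := by linarith

theorem mul_cot_lt (hx0 : x ≠ 0) (hx : |x| < π / 2) :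
    x * cot x < (π ^ 2 - 4 * x ^ 2) / (π ^ 2 - x ^ 2) := by
  have hxpi : |x| < π := hx.trans (half_lt_self pi_pos)
  have hsq : x ^ 2 < π ^ 2 := sq_lt_sq' (abs_lt.1 hxpi).1 (abs_lt.1 hxpi).2
  have hsq_half : x ^ 2 < (π / 2) ^ 2 := sq_lt_sq' (abs_lt.1 hx).1 (abs_lt.1 hx).2
  have hsum : 3 * x ^ 2 / (π ^ 2 - x ^ 2) * 1 < 1 - x * cot x :=
    hasSum_lt_of_zero_eq_of_succ_lt (by push_cast; ring)
      (fun n ↦ lt_two_mul_sq_div hx0 (by linarith) (by norm_cast; lia))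
      (hasSum_two_div_four_mul_succ_sq_sub_one.mul_left _)
      (hasSum_one_sub_mul_cot (sin_ne_zero_of_abs_lt_pi hx0 hxpi))
  calc x * cot x < 1 - 3 * x ^ 2 / (π ^ 2 - x ^ 2) := by linarith
    _ = (π ^ 2 - 4 * x ^ 2) / (π ^ 2 - x ^ 2) := by
        rw [one_sub_div (sub_pos.2 hsq).ne']; ring

end Bounds

theorem x_div_tan_bounds_general (x : ℝ) (hx0 : x ≠ 0) (hxpi : |x| < π) :
    (π ^ 2 - x ^ 2 - π ^ 2 * x ^ 2 / 3) / (π ^ 2 - x ^ 2) < x * cot x ∧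
    (|x| < π / 2 → x * cot x < (π ^ 2 - 4 * x ^ 2) / (π ^ 2 - x ^ 2)) :=
  ⟨lt_mul_cot hx0 hxpi, mul_cot_lt hx0⟩

theorem x_div_tan_bounds (x : ℝ) (hx0 : 0 < x) (hxpi : x < Real.pi / 2) :
    (Real.pi ^ 2 - x ^ 2 - Real.pi ^ 2 * x ^ 2 / 3) / (Real.pi ^ 2 - x ^ 2) < x / Real.tan x ∧
    x / Real.tan x < (Real.pi ^ 2 - 4 * x ^ 2) / (Real.pi ^ 2 - x ^ 2) := by
  rw [div_eq_mul_inv x, tan_inv_eq_cot]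
  have hx : |x| < π / 2 := by rwa [abs_of_pos hx0]
  exact (x_div_tan_bounds_general x hx0.ne' (hx.trans (half_lt_self pi_pos))).imp_right (· hx)
end
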